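/- arXiv:2301.00754 — 7 statements merged into one kernel-verified Lean document; each statement's English description precedes it below -/
import Mathlib

section
/- Let M be a prime number and let n, m be positive integers with n < M and m ≤ M. Then for all integers x₁, x₂ with 1 ≤ x₁, x₂ ≤ n and x₁ ≠ x₂, the number of pairs (a, b) with 1 ≤ a ≤ M−1 and 0 ≤ b ≤ M−1 such that ((a·x₁ + b) mod M) mod m = ((a·x₂ + b) mod M) mod m is at most M·(M−1)/m; equivalently, the number of such colliding pairs multiplied by m is at most M·(M−1). Hence, for (a,b) uniform with a ≠ 0, the hash function h̄(x) = ((a·x + b) mod M) mod m is universal: any two distinct inputs collide with probability at most 1/m. -/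
/-!
As `x₁ ≠ x₂` modulo the prime `M`, the pair of residues `(r, s)` of `a·x₁ + b` and `a·x₂ + b`
determines `(a, b)` (`affine_inj`), and `r ≠ s` because `a ≠ 0` (`affine_ne`). So the colliding
pairs are at most as many as the pairs `r ≠ s` below `M` with `r ≡ s` modulo `m`. For each of the
`M` values of `r` there are at most `⌈M/m⌉ - 1 ≤ (M - 1)/m` such `s` (`card_residue_le`).
-/

/-- Apart from `r` itself, the residue class of `r` modulo `m` has at most `(M - 1) / m` elements
below `M`. -/
lemma card_residue_le {M m r : ℕ} (hm : 0 < m) (hr : r < M) :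
    (((Finset.range M).filter (fun s => s ≡ r [MOD m])).erase r).card ≤ (M - 1) / m := by
  rw [Finset.card_erase_of_mem (by simp [hr, Nat.ModEq.refl]), ← Nat.count_eq_card_filter_range,
    Nat.count_modEq_card M hm r, Nat.le_div_iff_mul_le hm]
  have h := Nat.div_add_mod M m
  rw [mul_comm] at h
  split_ifs with h1
  · rw [Nat.add_sub_cancel]
    omega
  · rw [add_zero, Nat.sub_mul, one_mul]
    omega

lemma affine_ne {M a b x₁ x₂ : ℕ} (hM : M.Prime) (ha : 1 ≤ a) (haM : a < M)
    (h₁ : x₁ < M) (h₂ : x₂ < M) (hne : x₁ ≠ x₂) :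
    (a * x₁ + b) % M ≠ (a * x₂ + b) % M := by
  intro h
  have h' : a * x₁ ≡ a * x₂ [MOD M] := Nat.ModEq.add_right_cancel' b h
  have hc : Nat.gcd M a = 1 :=
    (hM.coprime_iff_not_dvd).2 (Nat.not_dvd_of_pos_of_lt ha haM)
  exact hne ((Nat.ModEq.cancel_left_of_coprime hc h').eq_of_lt_of_lt h₁ h₂)

lemma affine_inj {M a b a' b' x₁ x₂ : ℕ} (hM : M.Prime) (ha : a < M) (ha' : a' < M)
    (hb : b < M) (hb' : b' < M) (hx₁ : x₁ < M) (hx₂ : x₂ < M) (hne : x₁ ≠ x₂)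
    (h₁ : (a * x₁ + b) % M = (a' * x₁ + b') % M)
    (h₂ : (a * x₂ + b) % M = (a' * x₂ + b') % M) : a = a' ∧ b = b' := by
  haveI := Fact.mk hM
  -- Equality in the field `ZMod M` is equality for naturals below `M`.
  have key : ∀ {u v : ℕ}, u < M → v < M → (u : ZMod M) = v → u = v := by
    intro u v hu hv h
    exact ((ZMod.natCast_eq_natCast_iff u v M).1 h).eq_of_lt_of_lt hu hv
  rw [← ZMod.natCast_eq_natCast_iff'] at h₁ h₂
  push_cast at h₁ h₂
  have h0 : ((a : ZMod M) - a') * ((x₁ : ZMod M) - x₂) = 0 := by linear_combination h₁ - h₂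
  have hx : (x₁ : ZMod M) - x₂ ≠ 0 := fun h => hne (key hx₁ hx₂ (sub_eq_zero.1 h))
  have hA : (a : ZMod M) = a' := sub_eq_zero.1 ((mul_eq_zero.1 h0).resolve_right hx)
  refine ⟨key ha ha' hA, key hb hb' ?_⟩
  linear_combination h₁ - (x₁ : ZMod M) * hA

/-- Universality of `h̄(x) = ((a·x + b) mod M) mod m`: for a prime `M`, `n < M`,
`m ≤ M`, and distinct `x₁ ≠ x₂` in `[1,n]`, the number of pairs `(a,b)` with
`1 ≤ a ≤ M−1`, `0 ≤ b ≤ M−1` that make `x₁, x₂` collide, multiplied by `m`, is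
at most `M·(M−1)`; hence for uniform `(a,b)` with `a ≠ 0` the collision
probability is at most `1/m`. -/
theorem statement9 (M n m : ℕ) (hM : Nat.Prime M) (hn : 0 < n) (hm : 0 < m)
    (hnM : n < M) (hmM : m ≤ M) (x₁ x₂ : ℕ)
    (hx₁ : 1 ≤ x₁) (hx₁n : x₁ ≤ n) (hx₂ : 1 ≤ x₂) (hx₂n : x₂ ≤ n) (hne : x₁ ≠ x₂) :
    ((Finset.Icc 1 (M - 1) ×ˢ Finset.range M).filter
        (fun ab : ℕ × ℕ =>
          ((ab.1 * x₁ + ab.2) % M) % m = ((ab.1 * x₂ + ab.2) % M) % m)).card * m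
      ≤ M * (M - 1) ∧
    (((Finset.Icc 1 (M - 1) ×ˢ Finset.range M).filter
        (fun ab : ℕ × ℕ =>
          ((ab.1 * x₁ + ab.2) % M) % m = ((ab.1 * x₂ + ab.2) % M) % m)).card : ℝ)
        / (M * (M - 1)) ≤ 1 / m := by
  have hM0 := hM.pos
  have hM2 := hM.two_le
  have hmain : ((Finset.Icc 1 (M - 1) ×ˢ Finset.range M).filter
        (fun ab : ℕ × ℕ =>
          ((ab.1 * x₁ + ab.2) % M) % m = ((ab.1 * x₂ + ab.2) % M) % m)).card * m
      ≤ M * (M - 1) := by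
    have hcard := Finset.card_le_mul_card_image_of_maps_to
      (s := (Finset.Icc 1 (M - 1) ×ˢ Finset.range M).filter
        (fun ab : ℕ × ℕ =>
          ((ab.1 * x₁ + ab.2) % M) % m = ((ab.1 * x₂ + ab.2) % M) % m))
      (t := Finset.range M) (f := fun ab : ℕ × ℕ => (ab.1 * x₁ + ab.2) % M)
      (fun ab _ => Finset.mem_range.2 (Nat.mod_lt _ hM0)) ((M - 1) / m) (by
        intro r hr
        refine le_trans ?_ (card_residue_le hm (Finset.mem_range.1 hr))
        -- With `r` fixed, the second residue `s` determines the pair `(a, b)`.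
        refine Finset.card_le_card_of_injOn (fun ab : ℕ × ℕ => (ab.1 * x₂ + ab.2) % M) ?_ ?_
        · rintro ⟨a, b⟩ h
          simp only [Finset.coe_filter, Finset.mem_filter, Finset.mem_product, Finset.mem_Icc,
            Finset.mem_range, Set.mem_setOf_eq] at h
          obtain ⟨⟨⟨⟨ha, haM⟩, hb⟩, hcol⟩, rfl⟩ := h
          simp only [Finset.mem_coe, Finset.mem_erase, Finset.mem_filter, Finset.mem_range]
          exact ⟨(affine_ne hM ha (by omega) (by omega) (by omega) hne).symm,
            Nat.mod_lt _ hM0, hcol.symm⟩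
        · rintro ⟨a, b⟩ h ⟨a', b'⟩ h' heq
          simp only [Finset.coe_filter, Finset.mem_filter, Finset.mem_product, Finset.mem_Icc,
            Finset.mem_range, Set.mem_setOf_eq] at h h'
          obtain ⟨⟨⟨⟨ha, haM⟩, hb⟩, hcol⟩, hr1⟩ := h
          obtain ⟨⟨⟨⟨ha', haM'⟩, hb'⟩, hcol'⟩, hr1'⟩ := h'
          exact Prod.ext_iff.2 (affine_inj hM (by omega) (by omega) hb hb' (by omega) (by omega)
            hne (hr1.trans hr1'.symm) heq))
    rw [Finset.card_range] at hcard
    calc _ ≤ (M - 1) / m * M * m := Nat.mul_le_mul_right m hcard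
      _ = M * ((M - 1) / m * m) := by ring
      _ ≤ M * (M - 1) := Nat.mul_le_mul_left M (Nat.div_mul_le_self _ _)
  refine ⟨hmain, ?_⟩
  have hMr : (2 : ℝ) ≤ M := by exact_mod_cast hM2
  have hmr : (0 : ℝ) < m := by exact_mod_cast hm
  rw [div_le_div_iff₀ (mul_pos (by linarith) (by linarith)) hmr, one_mul]
  have hcast := (Nat.cast_le (α := ℝ)).2 hmain
  rw [Nat.cast_mul, Nat.cast_mul, Nat.cast_sub hM.one_le, Nat.cast_one] at hcast
  exact hcast
end

section
/- Let m ≥ 1 and let H₁, …, H_m be random variables on a probability space, each taking values in {0,…,m−1}, each uniformly distributed, and pairwise independent. For j ∈ {0,…,m−1} let L_j = #{i : H_i = j} (the length of the j-th chain; note E[L_j] = 1), and let L'_max = max_j |L_j − 1|. Then E[L'_max] ≤ (2 + √2)·√(2m); in particular, E[L'_max] ∈ O(√m). -/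
open MeasureTheory ProbabilityTheory

/-!
The maximum deviation is controlled by the sum `S = ∑ j, (L_j - 1)²` of the squared deviations: by
AM-GM, `2√m · max_j |L_j - 1| ≤ m + S`. Each `L_j` is a sum of `m` pairwise independent indicators
of probability `1/m`, so its mean is `1` and its variance at most `1`; hence `E[S] ≤ m` and
`E[max_j |L_j - 1|] ≤ √m`, which is stronger than the claimed bound.
-/

/-- The length of the `j`-th chain has second moment at most `1` about its mean `1`. -/
lemma chain_second_moment {Ω : Type*} [MeasurableSpace Ω] (P : Measure Ω) [IsProbabilityMeasure P]
    (m : ℕ) (hm : 1 ≤ m) (H : Fin m → Ω → Fin m)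
    (hmeas : ∀ i, Measurable (H i))
    (hunif : ∀ (i : Fin m) (j : Fin m), P {ω | H i ω = j} = (m : ENNReal)⁻¹)
    (hindep : ∀ i j, i ≠ j → IndepFun (H i) (H j) P) (j : Fin m) :
    Integrable (fun ω => (((Finset.univ.filter fun i => H i ω = j).card : ℝ) - 1) ^ 2) P ∧
    ∫ ω, (((Finset.univ.filter fun i => H i ω = j).card : ℝ) - 1) ^ 2 ∂P ≤ 1 := by
  have hm0 : (m : ℝ) ≠ 0 := by positivity
  set f : Fin m → ℝ := fun k => if k = j then 1 else 0 with hf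
  set X : Fin m → Ω → ℝ := fun i => f ∘ H i with hX
  have hfm : Measurable f := measurable_of_finite f
  have hXm : ∀ i, Measurable (X i) := fun i => hfm.comp (hmeas i)
  have hL2 : ∀ i, MemLp (X i) 2 P := fun i => by
    refine MemLp.of_bound (hXm i).aestronglyMeasurable 1 (ae_of_all _ fun ω => ?_)
    simp only [hX, hf, Function.comp]
    split_ifs <;> simp
  have hint : ∀ i, ∫ ω, X i ω ∂P = (m : ℝ)⁻¹ := fun i => by
    have hset : MeasurableSet {ω | H i ω = j} := hmeas i (measurableSet_singleton j)
    have : X i = Set.indicator {ω | H i ω = j} 1 := by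
      ext ω
      simp [hX, hf, Set.indicator_apply]
    rw [this, integral_indicator_one hset, measureReal_def, hunif]
    simp
  have hcard : ∀ ω, ((Finset.univ.filter fun i => H i ω = j).card : ℝ) = (∑ i, X i) ω := by
    intro ω
    simp [hX, hf]
  have hmean : ∫ ω, (∑ i, X i) ω ∂P = 1 := by
    simp only [Finset.sum_apply]
    rw [integral_finsetSum _ fun i _ => (hL2 i).integrable one_le_two]
    simp [hint, hm0]
  have hsum : MemLp (∑ i, X i) 2 P := memLp_finsetSum' _ fun i _ => hL2 i
  have hvar : variance (∑ i, X i) P ≤ 1 := by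
    rw [IndepFun.variance_sum (fun i _ => hL2 i)
      (fun i _ k _ hik => (hindep i k hik).comp hfm hfm)]
    calc ∑ i, variance (X i) P ≤ ∑ _i : Fin m, (m : ℝ)⁻¹ := by
          refine Finset.sum_le_sum fun i _ => ?_
          refine (variance_le_expectation_sq (hXm i).aestronglyMeasurable).trans ?_
          have : X i ^ 2 = X i := by
            ext ω
            simp [hX, hf]
          rw [this, hint]
      _ = 1 := by simp [hm0]
  simp only [hcard]
  refine ⟨(hsum.sub (memLp_const 1)).integrable_sq, ?_⟩
  rwa [variance_eq_integral hsum.aestronglyMeasurable.aemeasurable, hmean] at hvar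

/-- Expected longest chain deviation under pairwise-independent hashing: if
`H₁,…,H_m` are pairwise independent and uniform on `m` buckets,
`L_j = #{i : H_i = j}` (so `E[L_j] = 1`) and `L'_max = max_j |L_j − 1|`, then
`E[L'_max] ≤ (2 + √2)·√(2m)`, i.e. `E[L'_max] ∈ O(√m)`. -/
theorem statement11 {Ω : Type*} [MeasurableSpace Ω] (P : Measure Ω) [IsProbabilityMeasure P]
    (m : ℕ) (hm : 1 ≤ m) (H : Fin m → Ω → Fin m)
    (hmeas : ∀ i, Measurable (H i))
    (hunif : ∀ (i : Fin m) (j : Fin m), P {ω | H i ω = j} = (m : ENNReal)⁻¹)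
    (hindep : ∀ i j, i ≠ j → IndepFun (H i) (H j) P) :
    ∫ ω, (⨆ j : Fin m, |((Finset.univ.filter fun i => H i ω = j).card : ℝ) - 1|) ∂P
      ≤ (2 + Real.sqrt 2) * Real.sqrt (2 * m) := by
  have hkey := chain_second_moment P m hm H hmeas hunif hindep
  set D : Fin m → Ω → ℝ := fun j ω => ((Finset.univ.filter fun i => H i ω = j).card : ℝ) - 1
    with hD
  change ∫ ω, (⨆ j : Fin m, |D j ω|) ∂P ≤ _
  replace hkey : ∀ j, Integrable (fun ω => D j ω ^ 2) P ∧ ∫ ω, D j ω ^ 2 ∂P ≤ 1 := hkey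
  have : Nonempty (Fin m) := ⟨⟨0, hm⟩⟩
  have hmpos : (0 : ℝ) < m := by exact_mod_cast hm
  set a : ℝ := Real.sqrt m with ha
  have hapos : 0 < a := Real.sqrt_pos.2 hmpos
  have hasq : a ^ 2 = m := Real.sq_sqrt hmpos.le
  have hSint : Integrable (fun ω => ∑ j, D j ω ^ 2) P :=
    integrable_finsetSum _ fun j _ => (hkey j).1
  have hES : ∫ ω, ∑ j, D j ω ^ 2 ∂P ≤ m := by
    rw [integral_finsetSum _ fun j _ => (hkey j).1]
    calc ∑ j, ∫ ω, D j ω ^ 2 ∂P ≤ ∑ _j : Fin m, (1 : ℝ) :=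
          Finset.sum_le_sum fun j _ => (hkey j).2
      _ = m := by simp
  have hpt : ∀ ω, (⨆ j : Fin m, |D j ω|) ≤ (m + ∑ j, D j ω ^ 2) / (2 * a) := by
    intro ω
    refine ciSup_le fun j => ?_
    have h1 : D j ω ^ 2 ≤ ∑ j, D j ω ^ 2 :=
      Finset.single_le_sum (f := fun j => D j ω ^ 2) (fun _ _ => sq_nonneg _) (Finset.mem_univ j)
    rw [le_div_iff₀ (by positivity)]
    nlinarith [sq_nonneg (|D j ω| - a), sq_abs (D j ω)]
  have hE : ∫ ω, (⨆ j : Fin m, |D j ω|) ∂P ≤ a := by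
    -- The Bochner integral is monotone here without measurability of the supremum.
    calc ∫ ω, (⨆ j : Fin m, |D j ω|) ∂P ≤ ∫ ω, (m + ∑ j, D j ω ^ 2) / (2 * a) ∂P :=
          integral_mono_of_nonneg (ae_of_all _ fun ω => Real.iSup_nonneg fun j => abs_nonneg _)
            (((integrable_const _).add hSint).div_const _) (ae_of_all _ hpt)
      _ = (m + ∫ ω, ∑ j, D j ω ^ 2 ∂P) / (2 * a) := by
          rw [integral_div, integral_add (integrable_const _) hSint]
          simp
      _ ≤ a := by
          rw [div_le_iff₀ (by positivity)]
          nlinarith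
  have hmono : a ≤ Real.sqrt (2 * m) := Real.sqrt_le_sqrt (by linarith)
  nlinarith [Real.sqrt_nonneg 2, Real.sqrt_nonneg (2 * (m : ℝ)),
    mul_nonneg (Real.sqrt_nonneg 2) (Real.sqrt_nonneg (2 * (m : ℝ)))]
end

section
/- Let n ≥ 1 and let A, B be finite subsets of Fin n. Then the number of permutations σ of Fin n such that min(σ(A)) = min(σ(B)) (minima taken in the linear order of Fin n, with the convention that the minimum of the empty set is a common top element), multiplied by |A ∪ B|, equals n!·|A ∩ B|. Equivalently, for a uniformly random permutation h of Fin n with A ∪ B nonempty, P(min h(A) = min h(B)) = |A ∩ B| / |A ∪ B| = J(A,B), so the MinHash estimator is an unbiased estimator of the Jaccard similarity. -/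
/-!
For a finite set `U` and a point `x`, let `minAt U x` be the set of permutations under which `x`
attains the minimum of `U`. Right multiplication by a transposition of two points of `U` shows that
`minAt U x` has the same size for all `x ∈ U` (`card_minAt_eq`). By injectivity these sets are
disjoint, and for nonempty `U` they cover all permutations, so each has size `n! / |U|`. Finally, when
`U = A ∪ B` is nonempty, `A` and `B` have the same minimum under `σ` exactly when the minimum
of `σ(U)` is attained at a point of `A ∩ B` (`min_image_eq_iff`), so the event is the union of
`minAt U x` over `x ∈ A ∩ B`.
-/

/-- The permutations `σ` for which `σ x` is a lower bound of `σ(U)`; for `x ∈ U`, those for which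
the minimum of `σ(U)` is attained at `x`. -/
def minAt {n : ℕ} (U : Finset (Fin n)) (x : Fin n) : Finset (Equiv.Perm (Fin n)) :=
  Finset.univ.filter fun σ => ∀ y ∈ U, σ x ≤ σ y

theorem mem_minAt {n : ℕ} {U : Finset (Fin n)} {x : Fin n} {σ : Equiv.Perm (Fin n)} :
    σ ∈ minAt U x ↔ ∀ y ∈ U, σ x ≤ σ y := by
  simp [minAt]

theorem mul_swap_mem_minAt {n : ℕ} {U : Finset (Fin n)} {x y : Fin n} (hx : x ∈ U) (hy : y ∈ U)
    {σ : Equiv.Perm (Fin n)} (h : σ ∈ minAt U x) : σ * Equiv.swap x y ∈ minAt U y := by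
  rw [mem_minAt] at h ⊢
  intro z hz
  rw [Equiv.Perm.mul_apply, Equiv.Perm.mul_apply, Equiv.swap_apply_right]
  apply h
  rw [Equiv.swap_apply_def]
  split_ifs <;> assumption

/-- All points of `U` are equally likely to attain the minimum of `σ(U)`. -/
theorem card_minAt_eq {n : ℕ} {U : Finset (Fin n)} {x y : Fin n} (hx : x ∈ U) (hy : y ∈ U) :
    (minAt U x).card = (minAt U y).card := by
  have key : ∀ {x y : Fin n}, x ∈ U → y ∈ U → (minAt U x).card ≤ (minAt U y).card := by
    intro x y hx hy
    exact Finset.card_le_card_of_injOn (fun σ => σ * Equiv.swap x y)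
      (fun σ hσ => mul_swap_mem_minAt hx hy hσ) (mul_left_injective _).injOn
  exact le_antisymm (key hx hy) (key hy hx)

theorem card_biUnion_minAt {n : ℕ} {U S : Finset (Fin n)} (hS : S ⊆ U) {x : Fin n} (hx : x ∈ U) :
    (S.biUnion (minAt U)).card = S.card * (minAt U x).card := by
  rw [Finset.card_biUnion, Finset.sum_congr rfl fun y hy => card_minAt_eq (hS hy) hx,
    Finset.sum_const, smul_eq_mul]
  intro y hy z hz hyz
  refine Finset.disjoint_left.2 fun σ h1 h2 => hyz (σ.injective ?_)
  exact le_antisymm (mem_minAt.1 h1 z (hS hz)) (mem_minAt.1 h2 y (hS hy))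

theorem biUnion_minAt_self {n : ℕ} {U : Finset (Fin n)} (hU : U.Nonempty) :
    U.biUnion (minAt U) = Finset.univ := by
  refine Finset.eq_univ_of_forall fun σ => ?_
  obtain ⟨x, hx, h⟩ := Finset.exists_min_image U σ hU
  exact Finset.mem_biUnion.2 ⟨x, hx, mem_minAt.2 h⟩

theorem min_image_eq_iff {n : ℕ} {A B : Finset (Fin n)} (hU : (A ∪ B).Nonempty)
    (σ : Equiv.Perm (Fin n)) :
    (A.image σ).min = (B.image σ).min ↔ σ ∈ (A ∩ B).biUnion (minAt (A ∪ B)) := by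
  simp only [Finset.mem_biUnion, mem_minAt]
  constructor
  · intro h
    have hA : A.Nonempty := by
      by_contra hA
      rw [Finset.not_nonempty_iff_eq_empty] at hA
      subst hA
      rw [Finset.image_empty, Finset.min_empty, eq_comm, Finset.min_eq_top,
        Finset.image_eq_empty] at h
      simp [h] at hU
    obtain ⟨m, hm⟩ := Finset.min_of_nonempty (hA.image σ)
    obtain ⟨x, hxA, hx⟩ := Finset.mem_image.1 (Finset.mem_of_min hm)
    obtain ⟨y, hyB, hy⟩ := Finset.mem_image.1 (Finset.mem_of_min (h ▸ hm))
    obtain rfl : x = y := σ.injective (hx.trans hy.symm)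
    refine ⟨x, Finset.mem_inter.2 ⟨hxA, hyB⟩, fun z hz => ?_⟩
    rw [hx]
    rcases Finset.mem_union.1 hz with hz | hz
    · exact Finset.min_le_of_eq (Finset.mem_image_of_mem σ hz) hm
    · exact Finset.min_le_of_eq (Finset.mem_image_of_mem σ hz) (h ▸ hm)
  · rintro ⟨x, hx, h⟩
    have key : ∀ C : Finset (Fin n), x ∈ C → C ⊆ A ∪ B → (C.image σ).min = (σ x : Fin n) := by
      intro C hxC hC
      refine le_antisymm (Finset.min_le (Finset.mem_image_of_mem σ hxC)) (Finset.le_min ?_)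
      intro b hb
      obtain ⟨z, hz, rfl⟩ := Finset.mem_image.1 hb
      exact WithTop.coe_le_coe.2 (h z (hC hz))
    rw [key A (Finset.mem_inter.1 hx).1 Finset.subset_union_left,
      key B (Finset.mem_inter.1 hx).2 Finset.subset_union_right]

/-- MinHash is an unbiased estimator of Jaccard similarity: the number of
permutations `σ` of `Fin n` with `min σ(A) = min σ(B)` (minimum of the empty set
being the top element `⊤` of `WithTop (Fin n)`), multiplied by `|A ∪ B|`, equals
`n!·|A ∩ B|`; equivalently for a uniform permutation and `A ∪ B ≠ ∅`,
`P(min σ(A) = min σ(B)) = |A ∩ B|/|A ∪ B| = J(A,B)`. -/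
theorem statement13 (n : ℕ) (hn : 1 ≤ n) (A B : Finset (Fin n)) :
    (Finset.univ.filter fun σ : Equiv.Perm (Fin n) =>
        (A.image σ).min = (B.image σ).min).card * (A ∪ B).card
      = n.factorial * (A ∩ B).card ∧
    ((A ∪ B).Nonempty →
      ((Finset.univ.filter fun σ : Equiv.Perm (Fin n) =>
          (A.image σ).min = (B.image σ).min).card : ℝ) / n.factorial
        = ((A ∩ B).card : ℝ) / ((A ∪ B).card : ℝ)) := by
  have main : (Finset.univ.filter fun σ : Equiv.Perm (Fin n) =>
      (A.image σ).min = (B.image σ).min).card * (A ∪ B).card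
      = n.factorial * (A ∩ B).card := by
    rcases (A ∪ B).eq_empty_or_nonempty with hU | hU
    · obtain ⟨rfl, rfl⟩ := Finset.union_eq_empty.1 hU
      simp
    · obtain ⟨x, hx⟩ := id hU
      have hevent : (Finset.univ.filter fun σ : Equiv.Perm (Fin n) =>
          (A.image σ).min = (B.image σ).min) = (A ∩ B).biUnion (minAt (A ∪ B)) := by
        ext σ
        rw [Finset.mem_filter_univ, min_image_eq_iff hU]
      have htotal : n.factorial = (A ∪ B).card * (minAt (A ∪ B) x).card := by
        rw [← card_biUnion_minAt subset_rfl hx, biUnion_minAt_self hU, Finset.card_univ,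
          Fintype.card_perm, Fintype.card_fin]
      rw [hevent, card_biUnion_minAt
        (Finset.inter_subset_left.trans Finset.subset_union_left) hx, htotal]
      ring
  refine ⟨main, fun hU => ?_⟩
  rw [div_eq_div_iff (by exact_mod_cast n.factorial_ne_zero) (by exact_mod_cast hU.card_ne_zero),
    mul_comm ((A ∩ B).card : ℝ)]
  exact_mod_cast main
end

section
/- Let n ≥ 1 and let H be a nonempty finite family of functions h : Fin n → ℕ that is min-wise independent, in the sense that for every nonempty subset A of Fin n and every i ∈ A, the number of h ∈ H such that h(i) < h(j) for all j ∈ A with j ≠ i, multiplied by |A|, equals |H|. Then every integer k with 1 ≤ k ≤ n divides |H|; consequently |H| is at least lcm(1, 2, …, n), the least common multiple of the integers from 1 to n. -/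
/-- Lower bound on the size of a min-wise independent family: if for every
nonempty `A ⊆ Fin n` and every `i ∈ A` the number of `h ∈ H` for which `h i` is
the strict minimum of `h` on `A`, multiplied by `|A|`, equals `|H|`, then every
`k` with `1 ≤ k ≤ n` divides `|H|`, so `lcm(1,…,n) ≤ |H|`. -/
theorem statement14 (n : ℕ) (hn : 1 ≤ n) (H : Finset (Fin n → ℕ)) (hH : H.Nonempty)
    (hmin : ∀ A : Finset (Fin n), A.Nonempty → ∀ i ∈ A,
      (H.filter fun h => ∀ j ∈ A, j ≠ i → h i < h j).card * A.card = H.card) :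
    (∀ k : ℕ, 1 ≤ k → k ≤ n → k ∣ H.card) ∧ (Finset.Icc 1 n).lcm id ≤ H.card := by
  have hdvd : ∀ k : ℕ, 1 ≤ k → k ≤ n → k ∣ H.card := by
    intro k hk hkn
    -- The hypothesis on any `k`-element set `A` exhibits `|H|` as a multiple of `k`.
    obtain ⟨A, -, hA⟩ := Finset.exists_subset_card_eq
      (s := (Finset.univ : Finset (Fin n))) (n := k) (by simpa using hkn)
    have hne : A.Nonempty := Finset.card_pos.mp (by omega)
    obtain ⟨i, hi⟩ := hne
    have h := hmin A ⟨i, hi⟩ i hi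
    rw [hA] at h
    exact Dvd.intro_left _ h
  refine ⟨hdvd, Nat.le_of_dvd hH.card_pos (Finset.lcm_dvd fun k hk => ?_)⟩
  rw [Finset.mem_Icc] at hk
  exact hdvd k hk.1 hk.2
end

section
/- (Fine–Wilf / Wilf's theorem) Let S be a string of length L over an arbitrary alphabet, viewed as a function from {0,…,L−1} to the alphabet, and let p, q ≥ 1 be periods of S, meaning S(i) = S(i+p) whenever i+p < L and S(i) = S(i+q) whenever i+q < L. If L ≥ p + q − gcd(p,q), then gcd(p,q) is also a period of S, i.e., S(i) = S(i + gcd(p,q)) whenever i + gcd(p,q) < L. -/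
/-- Fine–Wilf / Wilf's theorem: if a string `S` of length `L` has periods `p` and
`q` with `L ≥ p + q − gcd(p,q)`, then `gcd(p,q)` is also a period of `S`. -/
theorem statement15 {α : Type*} (L p q : ℕ) (S : ℕ → α) (hp : 1 ≤ p) (hq : 1 ≤ q)
    (hperp : ∀ i, i + p < L → S i = S (i + p))
    (hperq : ∀ i, i + q < L → S i = S (i + q))
    (hL : p + q - Nat.gcd p q ≤ L) :
    ∀ i, i + Nat.gcd p q < L → S i = S (i + Nat.gcd p q) := by
  -- Transport to the list `[S 0, …, S (L - 1)]`, where Mathlib has the periodicity lemma.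
  have key (r : ℕ) : ((List.range L).map S).HasPeriod r ↔ ∀ i, i + r < L → S i = S (i + r) := by
    rw [List.hasPeriod_iff_getElem?]
    simp only [List.length_map, List.length_range, Nat.lt_sub_iff_add_lt]
    refine forall₂_congr fun i hi => ?_
    have hi' : i < L := by omega
    simp [hi, hi']
  rw [← key] at hperp hperq ⊢
  exact hperp.gcd hperq (by simpa using hL)
end

section
/- Let K ≥ 1, let P be a string of length K and S a string of length 2K over the same alphabet. Say P occurs in S at position r (0 ≤ r ≤ K) if S(r+j) = P(j) for all 0 ≤ j < K. Let r₁ < r₂ < ⋯ < r_t be the list of ALL positions at which P occurs in S, and suppose t ≥ 3. Then the occurrences form an arithmetic progression: r_{j+1} = r_j + p for all 1 ≤ j < t, where p = r₂ − r₁. -/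
/-!
Two occurrences of `P` at distance `d ≤ K` force `P` to have period `d`. For three consecutive
occurrences `a < a + d < a + d + e` in the window we have `d + e ≤ K`, so `P` has period
`g = gcd d e` by the Fine–Wilf periodicity theorem (`StrHasPeriod.gcd`). Since `g` divides `d`,
the overlapping copies at `a` and `a + d` spell out a further copy at `a + g`
(`occurs_add_of_dvd`); as nothing occurs strictly between `a` and `a + d`, this gives `g = d`.
The same argument at `a + d` gives `g = e`. So consecutive gaps are equal, and the progression
follows by induction.
-/

/-- The length-`K` prefix of `P` has period `d`. The degenerate cases `d = 0` and `d ≥ K` hold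
trivially. -/
def StrHasPeriod {α : Type*} (P : ℕ → α) (K d : ℕ) : Prop :=
  ∀ i, i + d < K → P (i + d) = P i

theorem StrHasPeriod.mul {α : Type*} {P : ℕ → α} {K g : ℕ} (h : StrHasPeriod P K g) (m : ℕ) :
    StrHasPeriod P K (g * m) := by
  induction m with
  | zero => intro i _; simp
  | succ m ih =>
    intro i hi
    rw [Nat.mul_succ] at hi ⊢
    rw [← add_assoc, h _ (by omega), ih _ (by omega)]

/-- One subtractive step of Euclid's algorithm on periods. -/
theorem StrHasPeriod.sub {α : Type*} {P : ℕ → α} {K d e : ℕ} (hd : StrHasPeriod P K d)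
    (he : StrHasPeriod P K e) (hle : d ≤ e) (hK : d + e ≤ K) : StrHasPeriod P K (e - d) := by
  intro i hi
  by_cases h : i + e < K
  · have h1 := hd (i + (e - d)) (by omega)
    rw [show i + (e - d) + d = i + e by omega, he i h] at h1
    exact h1.symm
  · -- here `i ≥ K - e ≥ d`, so one can step back by `d` before stepping forward by `e`
    have h1 := hd (i - d) (by omega)
    have h2 := he (i - d) (by omega)
    rw [show i - d + d = i by omega] at h1
    rw [show i - d + e = i + (e - d) by omega] at h2
    rw [h1, h2]

/-- The Fine–Wilf periodicity theorem, under the weaker bound `d + e ≤ K`. -/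
theorem StrHasPeriod.gcd {α : Type*} {P : ℕ → α} {K : ℕ} (d e : ℕ) (hd : StrHasPeriod P K d)
    (he : StrHasPeriod P K e) (hK : d + e ≤ K) : StrHasPeriod P K (Nat.gcd d e) := by
  induction hn : d + e using Nat.strong_induction_on generalizing d e with
  | _ n ih =>
    rcases Nat.eq_zero_or_pos d with rfl | hd0
    · simpa using he
    rcases Nat.eq_zero_or_pos e with rfl | he0
    · simpa using hd
    rcases le_total d e with h | h
    · have := ih (d + (e - d)) (by omega) d (e - d) hd (hd.sub he h hK) (by omega) rfl
      rwa [Nat.gcd_sub_self_right h] at this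
    · have := ih (d - e + e) (by omega) (d - e) e (he.sub hd h (by omega)) he (by omega) rfl
      rwa [Nat.gcd_sub_self_left h] at this

theorem strHasPeriod_of_occurs {α : Type*} {P S : ℕ → α} {K a d : ℕ}
    (h1 : ∀ i, i < K → S (a + i) = P i) (h2 : ∀ i, i < K → S (a + d + i) = P i) :
    StrHasPeriod P K d := by
  intro i hi
  rw [← h1 _ hi, ← h2 i (by omega)]
  congr 1
  omega

/-- If `P` occurs at `a` and at `a + d`, and has a period `g` dividing `d`, then it also occurs at
`a + g`: the first `K - g` letters are read off the copy at `a`, the last `g` off that at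
`a + d`. -/
theorem occurs_add_of_dvd {α : Type*} {P S : ℕ → α} {K a d g : ℕ} (hd : d ≤ K) (hd0 : 0 < d)
    (hg : StrHasPeriod P K g) (hgd : g ∣ d)
    (h1 : ∀ i, i < K → S (a + i) = P i) (h2 : ∀ i, i < K → S (a + d + i) = P i) :
    ∀ i, i < K → S (a + g + i) = P i := by
  intro i hi
  have hle := Nat.le_of_dvd hd0 hgd
  by_cases h : i + g < K
  · rw [show a + g + i = a + (i + g) by omega, h1 _ h, hg i h]
  · obtain ⟨m, hm⟩ := Nat.dvd_sub hgd (dvd_refl g)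
    have h3 := hg.mul m (i + g - d) (by omega)
    rw [← hm, show i + g - d + (d - g) = i by omega] at h3
    rw [h3, ← h2 _ (by omega)]
    congr 1
    omega


/-- All occurrences of a pattern `P` of length `K` inside a string `S` of length
`2K` form an arithmetic progression: if `r 0 < r 1 < ⋯ < r (t-1)` lists all
positions `r ≤ K` at which `P` occurs in `S` and `t ≥ 3`, then
`r (j+1) = r j + (r 1 − r 0)` for all `j`. -/
theorem statement16 {α : Type*} (K : ℕ) (hK : 1 ≤ K) (P S : ℕ → α) (t : ℕ) (ht : 3 ≤ t)
    (r : Fin t → ℕ) (hmono : StrictMono r)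
    (hocc : ∀ j : Fin t, r j ≤ K ∧ ∀ i, i < K → S (r j + i) = P i)
    (hall : ∀ s : ℕ, s ≤ K → (∀ i, i < K → S (s + i) = P i) → ∃ j : Fin t, r j = s) :
    ∀ (j : ℕ) (hj : j + 1 < t),
      r ⟨j + 1, hj⟩ = r ⟨j, by omega⟩ + (r ⟨1, by omega⟩ - r ⟨0, by omega⟩) := by
  -- nothing occurs strictly between consecutive terms of the list
  have gap : ∀ (j : ℕ) (hj : j + 1 < t) (s : ℕ), (∀ i, i < K → S (s + i) = P i) →
      r ⟨j, by omega⟩ < s → s ≤ r ⟨j + 1, hj⟩ → s = r ⟨j + 1, hj⟩ := by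
    intro j hj s hs h1 h2
    obtain ⟨k, rfl⟩ := hall s (h2.trans (hocc _).1) hs
    have h3 := hmono.lt_iff_lt.1 h1
    have h4 := hmono.le_iff_le.1 h2
    rw [Fin.lt_def] at h3
    rw [Fin.le_def] at h4
    congr 1
    apply Fin.ext
    simp only at h3 h4 ⊢
    omega
  have step : ∀ (j : ℕ) (hj : j + 2 < t),
      r ⟨j + 2, hj⟩ - r ⟨j + 1, by omega⟩ = r ⟨j + 1, by omega⟩ - r ⟨j, by omega⟩ := by
    intro j hj
    have ha := (hocc ⟨j, by omega⟩).2
    have hb := (hocc ⟨j + 1, by omega⟩).2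
    obtain ⟨hcK, hc⟩ := hocc ⟨j + 2, hj⟩
    have hab : r ⟨j, by omega⟩ < r ⟨j + 1, by omega⟩ := hmono (Fin.mk_lt_mk.2 (by omega))
    have hbc : r ⟨j + 1, by omega⟩ < r ⟨j + 2, hj⟩ := hmono (Fin.mk_lt_mk.2 (by omega))
    have g1 := gap j (by omega)
    have g2 : ∀ s, (∀ i, i < K → S (s + i) = P i) → r ⟨j + 1, by omega⟩ < s →
        s ≤ r ⟨j + 2, hj⟩ → s = r ⟨j + 2, hj⟩ := gap (j + 1) hj
    generalize r ⟨j, by omega⟩ = a at *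
    generalize r ⟨j + 1, by omega⟩ = b at *
    generalize r ⟨j + 2, hj⟩ = c at *
    obtain ⟨d, rfl⟩ := Nat.exists_eq_add_of_le hab.le
    obtain ⟨e, rfl⟩ := Nat.exists_eq_add_of_le hbc.le
    have hP := StrHasPeriod.gcd d e (strHasPeriod_of_occurs ha hb)
      (strHasPeriod_of_occurs hb hc) (by omega)
    have hd := Nat.gcd_dvd_left d e
    have he := Nat.gcd_dvd_right d e
    have hpos : 0 < Nat.gcd d e := Nat.gcd_pos_of_pos_left e (by omega)
    have hld := Nat.le_of_dvd (by omega) hd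
    have hle := Nat.le_of_dvd (by omega) he
    have e1 := g1 (a + Nat.gcd d e)
      (occurs_add_of_dvd (by omega) (by omega) hP hd ha hb) (by omega) (by omega)
    have e2 := g2 (a + d + Nat.gcd d e)
      (occurs_add_of_dvd (by omega) (by omega) hP he hb hc) (by omega) (by omega)
    omega
  intro j
  induction j with
  | zero =>
    intro hj
    have : r ⟨0, by omega⟩ < r ⟨1, by omega⟩ := hmono (Fin.mk_lt_mk.2 (by omega))
    simp only [zero_add]
    omega
  | succ j ih =>
    intro hj
    have h1 := ih (by omega)
    have h2 := step j hj
    have h3 : r ⟨j + 1, by omega⟩ < r ⟨j + 1 + 1, hj⟩ := hmono (Fin.mk_lt_mk.2 (by omega))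
    simp only [add_assoc, Nat.reduceAdd] at *
    omega
end

section
/- Define a sequence of probability mass functions μ_m on ℕ (the law of the Morris counter after m increments) by: μ₀ is the point mass at 0, and μ_{m+1} is obtained from μ_m by, given current value i, incrementing to i+1 with probability 2^{−i} and staying at i with probability 1 − 2^{−i}. Then for every m ≥ 0, the expectation of 2^X − 1 under X ∼ μ_m equals m: ∑_{i=0}^∞ μ_m(i)·(2^i − 1) = m. That is, the estimator 2^X − 1 returned by Morris' approximate counting algorithm is an unbiased estimator of the true count m. -/
/-!
The law after `m` events is supported on `{0, …, m}`, so all series are finite sums. Summing the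
recursion against a test function `f` gives the one-step identity
`E f(X_{m+1}) = E [f(X_m) (1 - 2^{-X_m}) + f(X_m + 1) 2^{-X_m}]` (`morris_sum_succ`).
For `f = 1` the bracket is `1`, so the total mass stays `1`; for `f(i) = 2^i - 1` the bracket is
`f(i) + (2^{i+1} - 2^i) 2^{-i} = f(i) + 1`, so the expectation grows by exactly one at each step.
-/

/-- The law of the Morris approximate counter after `m` increments: starting from
the point mass at `0`, from state `i` the counter moves to `i+1` with probability
`2⁻ⁱ` and stays at `i` with probability `1 − 2⁻ⁱ`. -/
noncomputable def morrisPMF : ℕ → ℕ → ℝ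
  | 0, 0 => 1
  | 0, _ + 1 => 0
  | m + 1, 0 => morrisPMF m 0 * (1 - ((2 : ℝ) ^ (0 : ℕ))⁻¹)
  | m + 1, i + 1 => morrisPMF m (i + 1) * (1 - ((2 : ℝ) ^ (i + 1))⁻¹) +
      morrisPMF m i * ((2 : ℝ) ^ i)⁻¹

theorem morrisPMF_eq_zero_of_lt (m i : ℕ) (h : m < i) : morrisPMF m i = 0 := by
  induction m generalizing i with
  | zero =>
    obtain ⟨j, rfl⟩ : ∃ j, i = j + 1 := ⟨i - 1, by omega⟩
    simp [morrisPMF]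
  | succ m ih =>
    obtain ⟨j, rfl⟩ : ∃ j, i = j + 1 := ⟨i - 1, by omega⟩
    simp [morrisPMF, ih (j + 1) (by omega), ih j (by omega)]

/-- The one-step (Markov generator) identity for the expectation of a test function `f`. -/
theorem morris_sum_succ (f : ℕ → ℝ) (m : ℕ) :
    ∑ i ∈ Finset.range (m + 2), morrisPMF (m + 1) i * f i =
      ∑ i ∈ Finset.range (m + 1),
        morrisPMF m i * (f i * (1 - ((2 : ℝ) ^ i)⁻¹) + f (i + 1) * ((2 : ℝ) ^ i)⁻¹) := by
  -- The "stay" contributions, with the vanishing term `i = m + 1` included, so that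
  -- splitting off `i = 0` matches the two cases of the recursion.
  have stay : ∑ i ∈ Finset.range (m + 1), morrisPMF m i * (1 - ((2 : ℝ) ^ i)⁻¹) * f i =
      ∑ i ∈ Finset.range (m + 2), morrisPMF m i * (1 - ((2 : ℝ) ^ i)⁻¹) * f i := by
    rw [Finset.sum_range_succ _ (m + 1), morrisPMF_eq_zero_of_lt m (m + 1) (by omega)]
    ring
  have split : ∑ i ∈ Finset.range (m + 1),
        morrisPMF m i * (f i * (1 - ((2 : ℝ) ^ i)⁻¹) + f (i + 1) * ((2 : ℝ) ^ i)⁻¹) =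
      ∑ i ∈ Finset.range (m + 1), morrisPMF m i * (1 - ((2 : ℝ) ^ i)⁻¹) * f i +
        ∑ i ∈ Finset.range (m + 1), morrisPMF m i * ((2 : ℝ) ^ i)⁻¹ * f (i + 1) := by
    rw [← Finset.sum_add_distrib]
    exact Finset.sum_congr rfl fun i _ => by ring
  rw [split, stay, Finset.sum_range_succ' _ (m + 1), Finset.sum_range_succ' _ (m + 1)]
  simp only [morrisPMF, add_mul, Finset.sum_add_distrib]
  ring

theorem morris_sum_eq_one (m : ℕ) : ∑ i ∈ Finset.range (m + 1), morrisPMF m i = 1 := by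
  induction m with
  | zero => simp [morrisPMF]
  | succ m ih =>
    have h := morris_sum_succ (fun _ => 1) m
    simpa [ih] using h

theorem morris_sum_estimator (m : ℕ) :
    ∑ i ∈ Finset.range (m + 1), morrisPMF m i * ((2 : ℝ) ^ i - 1) = m := by
  induction m with
  | zero => simp
  | succ m ih =>
    have step : ∀ i : ℕ, ((2 : ℝ) ^ i - 1) * (1 - ((2 : ℝ) ^ i)⁻¹) +
        ((2 : ℝ) ^ (i + 1) - 1) * ((2 : ℝ) ^ i)⁻¹ = ((2 : ℝ) ^ i - 1) + 1 := by
      intro i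
      field_simp
      ring
    rw [morris_sum_succ (fun i => (2 : ℝ) ^ i - 1) m]
    simp only [step]
    simp only [mul_add, mul_one, Finset.sum_add_distrib, ih, morris_sum_eq_one]
    push_cast
    ring

/-- Morris' estimator `2^X − 1` is unbiased: for every `m`, the expectation of
`2^X − 1` when `X` is distributed according to the Morris counter law after `m`
increments equals `m`. -/
theorem statement19 (m : ℕ) :
    ∑' i : ℕ, morrisPMF m i * ((2 : ℝ) ^ i - 1) = (m : ℝ) := by
  rw [tsum_eq_sum (s := Finset.range (m + 1)), morris_sum_estimator]
  intro i hi
  rw [morrisPMF_eq_zero_of_lt m i (by simpa using hi), zero_mul]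
end
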